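/- arXiv:1009.0046 — 2 statements merged into one kernel-verified Lean document; each statement's English description precedes it below -/
import Mathlib

section
/- Let A be a nonnegatively filtered algebra over a field k such that the associated graded algebra Gr A is commutative. Suppose z_1,...,z_n are central elements of A such that the top symbols Gr z_1,...,Gr z_n form a regular sequence in Gr A. Then the associated graded ring of the quotient A/(z_1,...,z_n) is isomorphic to Gr A / (Gr z_1,...,Gr z_n). -/
/-- A nonnegative exhaustive algebra filtration `F₀ ⊆ F₁ ⊆ ⋯` on a `k`-algebra `A`,
with `1 ∈ F₀` and `Fᵢ · Fⱼ ⊆ F_{i+j}`. -/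
structure AlgFiltration (k A : Type*) [Field k] [Ring A] [Algebra k A] where
  F : ℕ → Submodule k A
  mono : Monotone F
  one_mem : (1 : A) ∈ F 0
  mul_mem : ∀ {i j : ℕ} {a b : A}, a ∈ F i → b ∈ F j → a * b ∈ F (i + j)
  exhaustive : ∀ a : A, ∃ i, a ∈ F i

namespace AlgFiltration

variable {k A : Type*} [Field k] [Ring A] [Algebra k A]

/-- `prev i` is `F (i-1)`, with the convention `F (-1) = 0`.  An element `a ∈ F i` has
zero symbol in degree `i` of `Gr A` exactly when `a ∈ prev i`. -/
def prev (𝓕 : AlgFiltration k A) (i : ℕ) : Submodule k A :=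
  if i = 0 then ⊥ else 𝓕.F (i - 1)

/-- The associated graded algebra `Gr A` is commutative: all commutators drop in
filtration degree. -/
def GrComm (𝓕 : AlgFiltration k A) : Prop :=
  ∀ {i j : ℕ} {a b : A}, a ∈ 𝓕.F i → b ∈ 𝓕.F j → a * b - b * a ∈ 𝓕.prev (i + j)

/-- The degree-`i` part of the ideal of `Gr A` generated by the top symbols
`Gr z_j` (`j < l`) of elements `z_j` of degree `d j`, pulled back to `F i`: an element
`a ∈ F i` has top symbol in this ideal iff `a ∈ symIdeal 𝓕 z d l i`. -/
def symIdeal (𝓕 : AlgFiltration k A) {n : ℕ} (z : Fin n → A) (d : Fin n → ℕ)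
    (l i : ℕ) : Submodule k A :=
  (⨆ (j : Fin n) (_ : (j : ℕ) < l) (_ : d j ≤ i),
      (𝓕.F (i - d j)).map (LinearMap.mulRight k (z j))) ⊔ 𝓕.prev i

end AlgFiltration

namespace AlgFiltration

variable {k A : Type*} [Field k] [Ring A] [Algebra k A]

theorem prev_le (𝓕 : AlgFiltration k A) (i : ℕ) : 𝓕.prev i ≤ 𝓕.F i := by
  unfold prev
  split_ifs
  · exact bot_le
  · exact 𝓕.mono (Nat.sub_le i 1)

theorem le_prev_of_lt (𝓕 : AlgFiltration k A) {i m : ℕ} (h : i < m) : 𝓕.F i ≤ 𝓕.prev m := by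
  rw [prev, if_neg (by omega)]
  exact 𝓕.mono (by omega)

/-- The elements `∑ bⱼ zⱼ` over `j < l` with each `bⱼ zⱼ` of filtration degree at most `i`
for degree reasons, that is `bⱼ ∈ F (i - dⱼ)` with `dⱼ ≤ i`. -/
def strictSpan (𝓕 : AlgFiltration k A) {n : ℕ} (z : Fin n → A) (d : Fin n → ℕ)
    (l i : ℕ) : Submodule k A :=
  ⨆ (j : Fin n) (_ : (j : ℕ) < l) (_ : d j ≤ i),
    (𝓕.F (i - d j)).map (LinearMap.mulRight k (z j))

variable (𝓕 : AlgFiltration k A) {n : ℕ} {z : Fin n → A} {d : Fin n → ℕ}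

theorem mul_mem_strictSpan {l i m : ℕ} {j : Fin n} (hj : (j : ℕ) < l) (hm : m + d j ≤ i)
    {b : A} (hb : b ∈ 𝓕.F m) : b * z j ∈ 𝓕.strictSpan z d l i := by
  refine Submodule.mem_iSup_of_mem j <| Submodule.mem_iSup_of_mem hj <|
    Submodule.mem_iSup_of_mem (by omega) ?_
  exact ⟨b, 𝓕.mono (by omega) hb, rfl⟩

theorem strictSpan_mono {l l' : ℕ} (h : l ≤ l') (i : ℕ) :
    𝓕.strictSpan z d l i ≤ 𝓕.strictSpan z d l' i :=
  iSup_mono fun _ => iSup_mono' fun hj => ⟨hj.trans_le h, le_rfl⟩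

theorem strictSpan_le (hzF : ∀ j, z j ∈ 𝓕.F (d j)) (l i : ℕ) :
    𝓕.strictSpan z d l i ≤ 𝓕.F i := by
  refine iSup_le fun j => iSup_le fun _ => iSup_le fun hd => ?_
  rintro _ ⟨b, hb, rfl⟩
  have := 𝓕.mul_mem hb (hzF j)
  rwa [Nat.sub_add_cancel hd] at this

theorem strictSpan_le_span (l i : ℕ) :
    𝓕.strictSpan z d l i ≤ (Ideal.span (z '' {j | (j : ℕ) < l})).restrictScalars k := by
  refine iSup_le fun j => iSup_le fun hj => iSup_le fun _ => ?_
  rintro _ ⟨b, -, rfl⟩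
  exact Ideal.mul_mem_left _ b (Ideal.subset_span ⟨j, hj, rfl⟩)

/-- If the symbols of the central elements `zⱼ` form a regular sequence, then every element of
`F i` in the ideal generated by the `zⱼ` is a combination of the `zⱼ` without cancellation of
leading terms. -/
theorem mem_strictSpan_of_mem_span (hzc : ∀ (j : Fin n) (a : A), z j * a = a * z j)
    (hzF : ∀ j, z j ∈ 𝓕.F (d j))
    (hreg : ∀ (l : Fin n) (i : ℕ), ∀ a ∈ 𝓕.F i,
      a * z l ∈ 𝓕.symIdeal z d l (i + d l) → a ∈ 𝓕.symIdeal z d l i)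
    {l : ℕ} (hl : l ≤ n) {i : ℕ} {a : A} (haF : a ∈ 𝓕.F i)
    (ha : a ∈ Ideal.span (z '' {j | (j : ℕ) < l})) : a ∈ 𝓕.strictSpan z d l i := by
  induction l generalizing i a with
  | zero =>
    have h0 : a = 0 := by simpa using ha
    exact h0 ▸ zero_mem _
  | succ l ih =>
    let t : Fin n := ⟨l, hl⟩
    have hset : {j : Fin n | (j : ℕ) < l + 1} = insert t {j : Fin n | (j : ℕ) < l} := by
      ext j
      simp only [Set.mem_ofPred_eq, Set.mem_insert_iff, Fin.ext_iff, t]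
      omega
    rw [hset, Set.image_insert_eq, Ideal.mem_span_insert] at ha
    obtain ⟨b, c, hc, hac⟩ := ha
    obtain ⟨m, hb⟩ := 𝓕.exhaustive b
    induction m using Nat.strong_induction_on generalizing b c with
    | _ m ihm =>
      by_cases hm : m + d t ≤ i
      · have hbz := 𝓕.mul_mem_strictSpan (z := z) (l := l + 1) (Nat.lt_succ_self l) hm hb
        have hcF : c ∈ 𝓕.F i := by
          rw [eq_sub_of_add_eq' hac.symm]
          exact sub_mem haF (𝓕.strictSpan_le hzF _ _ hbz)
        rw [hac]
        exact add_mem hbz (𝓕.strictSpan_mono l.le_succ i (ih (by omega) hcF hc))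
      · have hap : a ∈ 𝓕.prev (m + d t) := 𝓕.le_prev_of_lt (by omega) haF
        have hcF : c ∈ 𝓕.F (m + d t) := by
          rw [eq_sub_of_add_eq' hac.symm]
          exact sub_mem (𝓕.prev_le _ hap) (𝓕.mul_mem hb (hzF t))
        have hbz : b * z t ∈ 𝓕.symIdeal z d t (m + d t) := by
          rw [eq_sub_of_add_eq hac.symm]
          exact sub_mem (Submodule.mem_sup_right hap)
            (Submodule.mem_sup_left (ih (by omega) hcF hc))
        obtain ⟨s, hs, b', hb', rfl⟩ := Submodule.mem_sup.1 (hreg t m b hb hbz)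
        have hc' : s * z t + c ∈ Ideal.span (z '' {j | (j : ℕ) < l}) := by
          rw [← hzc]
          exact add_mem (Ideal.mul_mem_left _ _ (𝓕.strictSpan_le_span l m hs)) hc
        have hac' : a = b' * z t + (s * z t + c) := by rw [hac]; noncomm_ring
        rcases Nat.eq_zero_or_pos m with rfl | hpos
        · have hb0 : b' = 0 := by simpa [prev] using hb'
          rw [hb0, zero_mul, zero_add] at hac'
          exact 𝓕.strictSpan_mono l.le_succ i (ih (by omega) haF (hac' ▸ hc'))
        · rw [prev, if_neg hpos.ne'] at hb'
          exact ihm (m - 1) (by omega) b' _ hc' hac' hb'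

end AlgFiltration

/-- Let `A` be a nonnegatively filtered algebra over a field `k` with `Gr A` commutative,
and `z₁, …, zₙ` central elements of `A` (of exact filtration degrees `d₁, …, dₙ`) whose
top symbols form a regular sequence in `Gr A`.  Then
`Gr (A/(z₁, …, zₙ)) = Gr A / (Gr z₁, …, Gr zₙ)`: in each degree `i`, the part of `F i`
dying in `Gr (A/(z))`, namely `F i ∩ ((z₁, …, zₙ) + F (i-1))`, is exactly the degree-`i`
part of the ideal of `Gr A` generated by the top symbols. -/
theorem gr_of_quotient_by_central_regular {k A : Type*} [Field k] [Ring A] [Algebra k A]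
    (𝓕 : AlgFiltration k A) (hcomm : 𝓕.GrComm)
    (n : ℕ) (z : Fin n → A) (d : Fin n → ℕ)
    (hzc : ∀ (j : Fin n) (a : A), z j * a = a * z j)
    (hzF : ∀ j, z j ∈ 𝓕.F (d j)) (hzd : ∀ j, z j ∉ 𝓕.prev (d j))
    -- the top symbols `Gr z₁, …, Gr zₙ` form a regular sequence in `Gr A`
    (hreg : ∀ (l : Fin n) (i : ℕ), ∀ a ∈ 𝓕.F i,
      a * z l ∈ 𝓕.symIdeal z d l (i + d l) → a ∈ 𝓕.symIdeal z d l i) :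
    ∀ i : ℕ, 𝓕.F i ⊓ ((Ideal.span (Set.range z)).restrictScalars k ⊔ 𝓕.prev i) =
      𝓕.symIdeal z d n i := by
  intro i
  have himg : z '' {j : Fin n | (j : ℕ) < n} = Set.range z := by simp
  apply le_antisymm
  · rintro x ⟨hxF, hx⟩
    obtain ⟨a, ha, p, hp, rfl⟩ := Submodule.mem_sup.1 hx
    have haF : a ∈ 𝓕.F i := by simpa using sub_mem hxF (𝓕.prev_le i hp)
    have ha' : a ∈ Ideal.span (z '' {j : Fin n | (j : ℕ) < n}) := himg ▸ ha
    exact add_mem (Submodule.mem_sup_left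
      (𝓕.mem_strictSpan_of_mem_span hzc hzF hreg le_rfl haF ha')) (Submodule.mem_sup_right hp)
  · refine le_inf (sup_le (𝓕.strictSpan_le hzF n i) (𝓕.prev_le i)) (sup_le_sup_right ?_ _)
    exact himg ▸ 𝓕.strictSpan_le_span n i
end

section
/- Every finitely generated projective module over a polynomial ring k[x_1,...,x_n] over a field k is free (Quillen–Suslin theorem). -/
open Polynomial

/-- Two vectors over `R` are in the same orbit of the general linear group. -/
def GLRel {ι R : Type*} [Fintype ι] [DecidableEq ι] [CommRing R] (v w : ι → R) : Prop :=
  ∃ M N : Matrix ι ι R, M * N = 1 ∧ N * M = 1 ∧ M.mulVec v = w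

namespace GLRel

variable {ι R S : Type*} [Fintype ι] [DecidableEq ι] [CommRing R] [CommRing S]

lemma refl (v : ι → R) : GLRel v v := ⟨1, 1, by simp⟩

lemma symm {v w : ι → R} (h : GLRel v w) : GLRel w v := by
  obtain ⟨M, N, hMN, hNM, rfl⟩ := h
  exact ⟨N, M, hNM, hMN, by simp [hNM]⟩

lemma trans {u v w : ι → R} (h : GLRel u v) (h' : GLRel v w) : GLRel u w := by
  obtain ⟨M, N, hMN, hNM, rfl⟩ := h
  obtain ⟨M', N', hMN', hNM', rfl⟩ := h'
  refine ⟨M' * M, N * N', ?_, ?_, by simp⟩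
  · rw [mul_assoc, ← mul_assoc M, hMN, one_mul, hMN']
  · rw [mul_assoc, ← mul_assoc N', hNM', one_mul, hNM]

lemma map (f : R →+* S) {v w : ι → R} (h : GLRel v w) : GLRel (f ∘ v) (f ∘ w) := by
  obtain ⟨M, N, hMN, hNM, rfl⟩ := h
  refine ⟨M.map f, N.map f, ?_, ?_, ?_⟩
  · rw [← Matrix.map_mul, hMN, Matrix.map_one f f.map_zero f.map_one]
  · rw [← Matrix.map_mul, hNM, Matrix.map_one f f.map_zero f.map_one]
  · ext i
    simp [RingHom.map_mulVec]

lemma add_smul (v c u : ι → R) (h : u ⬝ᵥ c = 0) : GLRel v (v + (u ⬝ᵥ v) • c) := by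
  have key : Matrix.vecMulVec c u * Matrix.vecMulVec c u = 0 := by
    rw [Matrix.vecMulVec_mul_vecMulVec, h]; simp
  refine ⟨1 + Matrix.vecMulVec c u, 1 - Matrix.vecMulVec c u, ?_, ?_, ?_⟩
  · rw [mul_sub, mul_one, add_mul, key]; simp
  · rw [sub_mul, one_mul, mul_add, key]; simp
  · rw [Matrix.add_mulVec, Matrix.one_mulVec, Matrix.vecMulVec_mulVec]
    ext i; simp [mul_comm]

lemma single_of_eq_one (v : ι → R) (i : ι) (h : v i = 1) : GLRel v (Pi.single i 1) := by
  have := add_smul v (Pi.single i 1 - v) (Pi.single i 1) (by simp [h])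
  simpa [h] using this

lemma update_add (v : ι → R) {i : ι} (u : ι → R) (hu : u i = 0) :
    GLRel v (Function.update v i (v i + u ⬝ᵥ v)) := by
  convert add_smul v (Pi.single i 1) u (by simp [hu]) using 1
  ext j
  rcases eq_or_ne j i with rfl | h <;> simp [*]

/-- Any entry may be replaced modulo the ideal generated by two others. -/
lemma exists_update_of_mem_span_pair (v : ι → R) {i j l : ι} (hi : l ≠ i) (hj : l ≠ j) {a : R}
    (ha : a ∈ Ideal.span {v i, v j}) : GLRel v (Function.update v l (v l + a)) := by
  obtain ⟨x, y, rfl⟩ := Ideal.mem_span_pair.mp ha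
  convert update_add v (i := l) (Pi.single i x + Pi.single j y) (by simp [hi, hj]) using 3
  simp [add_dotProduct]

lemma unimodular {v w : ι → R} (h : GLRel v w) (hv : ∃ a : ι → R, a ⬝ᵥ v = 1) :
    ∃ a : ι → R, a ⬝ᵥ w = 1 := by
  obtain ⟨M, N, hMN, hNM, rfl⟩ := h
  obtain ⟨a, ha⟩ := hv
  refine ⟨Matrix.vecMul a N, ?_⟩
  rw [← Matrix.dotProduct_mulVec, Matrix.mulVec_mulVec, hNM, Matrix.one_mulVec, ha]

end GLRel

/-- If `f` is monic of degree `d + 1` and some `h` of degree at most `d` has a unit coefficient,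
then the ideal `(f, h)` contains a polynomial of degree at most `d` with any given coefficient of
`X ^ d`. -/
lemma Polynomial.exists_mem_span_pair_coeff_eq {A : Type*} [CommRing A] [Nontrivial A]
    {f h : A[X]} (hf : f.Monic) {d : ℕ} (hd : f.natDegree = d + 1) (hh : h.degree < f.degree)
    {m : ℕ} (hm : IsUnit (h.coeff m)) (c : A) :
    ∃ p ∈ Ideal.span {f, h}, p.degree < f.degree ∧ p.coeff d = c := by
  have hfd : f.degree = ((d + 1 : ℕ) : WithBot ℕ) := by rw [degree_eq_natDegree hf.ne_zero, hd]
  let J : Ideal A :=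
    { carrier := {a | ∃ p ∈ Ideal.span {f, h}, p.degree < f.degree ∧ p.coeff d = a}
      add_mem' := by
        rintro _ _ ⟨p, hp, hpd, rfl⟩ ⟨q, hq, hqd, rfl⟩
        exact ⟨p + q, add_mem hp hq, (degree_add_le _ _).trans_lt (max_lt hpd hqd), by simp⟩
      zero_mem' := ⟨0, zero_mem _, by simp [hfd], by simp⟩
      smul_mem' := by
        rintro a _ ⟨p, hp, hpd, rfl⟩
        exact ⟨C a * p, Ideal.mul_mem_left _ _ hp, by
          rw [← smul_eq_C_mul]; exact (degree_smul_le _ _).trans_lt hpd, by simp⟩ }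
  have key : ∀ e i : ℕ, i + e = d → ∀ p ∈ Ideal.span {f, h}, p.degree < f.degree →
      p.coeff i ∈ J := by
    intro e
    induction e with
    | zero => intro i hi p hp hpd; exact ⟨p, hp, hpd, by rw [← hi, add_zero]⟩
    | succ e ih =>
      intro i hi p hp hpd
      have hJ : p.coeff d ∈ J := ⟨p, hp, hpd, rfl⟩
      have hq := ih (i + 1) (by omega) (X * p - C (p.coeff d) * f)
        (sub_mem (Ideal.mul_mem_left _ _ hp)
          (Ideal.mul_mem_left _ _ (Ideal.subset_span (by simp)))) (by
          rw [hfd, degree_lt_iff_coeff_zero] at hpd ⊢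
          intro n hn
          obtain ⟨n, rfl⟩ := Nat.exists_eq_succ_of_ne_zero (by omega : n ≠ 0)
          rw [coeff_sub, coeff_X_mul, coeff_C_mul]
          rcases eq_or_ne n d with rfl | hne
          · have : f.coeff (n + 1) = 1 := by rw [← hd]; exact hf
            simp [this]
          · rw [hpd n (by omega), coeff_eq_zero_of_natDegree_lt (p := f) (by omega)]
            simp)
      rw [coeff_sub, coeff_X_mul, coeff_C_mul] at hq
      simpa using add_mem hq (J.mul_mem_right (f.coeff (i + 1)) hJ)
  have hmd : m ≤ d := by
    by_contra hlt
    rw [hfd, degree_lt_iff_coeff_zero] at hh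
    exact hm.ne_zero (hh m (by omega))
  have hJ : J = ⊤ := J.eq_top_of_isUnit_mem
    (key (d - m) m (by omega) h (Ideal.subset_span (by simp)) hh) hm
  exact (hJ ▸ Submodule.mem_top : c ∈ J)

section Local

variable {ι A : Type*} [Fintype ι] [CommRing A] [IsLocalRing A]

lemma exists_isUnit_coeff_of_unimodular {v : ι → A[X]} (hv : ∃ a : ι → A[X], a ⬝ᵥ v = 1)
    {i : ι} (hi : (v i).Monic) (hd : (v i).natDegree ≠ 0) :
    ∃ j ≠ i, ∃ m, IsUnit ((v j).coeff m) := by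
  by_contra! hcon
  obtain ⟨a, ha⟩ := hv
  let φ := mapRingHom (IsLocalRing.residue A)
  have hz : ∀ j ≠ i, φ (v j) = 0 := by
    intro j hj
    ext m
    simpa [φ, IsLocalRing.residue_eq_zero_iff] using hcon j hj m
  have h1 : φ (a i) * φ (v i) = 1 := by
    rw [← map_one φ, ← ha, dotProduct, map_sum, Finset.sum_eq_single i]
    · simp
    · intro j _ hj; simp [hz j hj]
    · simp
  have hm : (φ (v i)).Monic := hi.map _
  have := hm.eq_one_of_isUnit (IsUnit.of_mul_eq_one_right _ h1)
  have h2 : (φ (v i)).natDegree = (v i).natDegree := hi.natDegree_map _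
  rw [this] at h2
  simp at h2
  omega

/-- **Horrocks' theorem** for unimodular vectors over a local ring. -/
lemma GLRel.exists_single_of_monic [DecidableEq ι] (hι : 2 < Fintype.card ι) {v : ι → A[X]}
    (hv : ∃ a : ι → A[X], a ⬝ᵥ v = 1) {i : ι} (hi : (v i).Monic) :
    ∃ i, GLRel v (Pi.single i 1) := by
  induction hd : (v i).natDegree generalizing v i with
  | zero => exact ⟨i, single_of_eq_one v i (hi.natDegree_eq_zero.mp hd)⟩
  | succ d ih =>
    let c : ι → A[X] := fun j ↦ if j = i then 0 else - (v j /ₘ v i)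
    let w := v + (Pi.single i 1 ⬝ᵥ v) • c
    have hvw : GLRel v w := add_smul v c (Pi.single i 1) (by simp [c])
    have hwi : w i = v i := by simp [w, c]
    have hwj : ∀ j ≠ i, (w j).degree < (v i).degree := by
      intro j hj
      have : w j = v j %ₘ v i := by
        rw [modByMonic_eq_sub_mul_div]; simp [w, c, hj, sub_eq_add_neg]
      rw [this]
      exact degree_modByMonic_lt _ hi
    have hw := hvw.unimodular hv
    obtain ⟨j, hj, m, hm⟩ := exists_isUnit_coeff_of_unimodular hw (i := i) (by rwa [hwi])
      (by rw [hwi]; omega)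
    obtain ⟨l, hl⟩ : ∃ l, l ∉ ({i, j} : Finset ι) := by
      by_contra! hcon
      have := Finset.card_le_card (fun x _ ↦ hcon x : Finset.univ ⊆ ({i, j} : Finset ι))
      rw [Finset.card_univ] at this
      have := Finset.card_le_two (a := i) (b := j)
      omega
    simp only [Finset.mem_insert, Finset.mem_singleton, not_or] at hl
    obtain ⟨p, hp, hpd, hpc⟩ := exists_mem_span_pair_coeff_eq (hwi ▸ hi) (d := d) (by rw [hwi, hd])
      (by rw [hwi]; exact hwj j hj) hm (1 - (w l).coeff d)
    have hrel := exists_update_of_mem_span_pair w hl.1 hl.2 hp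
    have hdeg : (w l + p).natDegree ≤ d := by
      have h1 := (degree_add_le (w l) p).trans_lt (max_lt (hwj l hl.1) (hwi ▸ hpd))
      rw [degree_eq_natDegree hi.ne_zero, hd, degree_lt_iff_coeff_zero] at h1
      exact natDegree_le_iff_coeff_eq_zero.mpr fun N hN ↦ h1 N hN
    have hco : (w l + p).coeff d = 1 := by simp [hpc]
    have hnd : (w l + p).natDegree = d :=
      natDegree_eq_of_le_of_coeff_ne_zero hdeg (by rw [hco]; exact one_ne_zero)
    obtain ⟨i', hi'⟩ := ih ((hvw.trans hrel).unimodular hv) (i := l)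
      (by simpa using monic_of_natDegree_le_of_coeff_eq_one d hdeg hco) (by simpa using hnd)
    exact ⟨i', (hvw.trans hrel).trans hi'⟩

end Local

section Patching

variable {ι R L : Type*} [CommRing R] [CommRing L] [Algebra R L] (S : Submonoid R)
  [IsLocalization S L]

attribute [local instance] Polynomial.algebra in
lemma Polynomial.exists_comp_C_mul_X_mem_range (g : L[X][X])
    (hg : g.coeff 0 ∈ (mapRingHom (algebraMap R L)).range) :
    ∃ c ∈ S, ∀ a : R, c ∣ a →
      g.comp (C (C (algebraMap R L a)) * X) ∈
        (mapRingHom (mapRingHom (algebraMap R L))).range := by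
  have := Polynomial.isLocalization S L
  obtain ⟨⟨_, c, hc, rfl⟩, h⟩ := IsLocalization.exist_integer_multiples_of_finset (S.map C) g.coeffs
  refine ⟨c, hc, ?_⟩
  rintro _ ⟨b, rfl⟩
  refine (lifts_iff_liftsRing _ _).mp ((lifts_iff_coeff_lifts _).mpr fun n ↦ ?_)
  rw [comp_C_mul_X_coeff]
  rcases n with _ | n
  · simpa using hg
  by_cases hn : g.coeff (n + 1) = 0
  · exact ⟨0, by simp [hn]⟩
  obtain ⟨q, hq⟩ := h _ (coeff_mem_coeffs hn)
  refine ⟨q * C (c ^ n * b ^ (n + 1)), ?_⟩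
  rw [Algebra.smul_def] at hq
  change mapRingHom (algebraMap R L) q = mapRingHom (algebraMap R L) (C c) * _ at hq
  rw [map_mul, hq]
  simp only [coe_mapRingHom, map_C, map_mul, map_pow]
  ring

variable [Fintype ι] [DecidableEq ι]

lemma Matrix.exists_map_eq_map_comp_C_mul_X (G : Matrix ι ι L[X][X])
    (hG : G.map (fun g ↦ g.coeff 0) = 1) :
    ∃ c ∈ S, ∀ a : R, c ∣ a → ∃ H : Matrix ι ι R[X][X],
      H.map (mapRingHom (mapRingHom (algebraMap R L))) =
        G.map (compRingHom (C (C (algebraMap R L a)) * X)) := by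
  have h : ∀ i j, ∃ c ∈ S, ∀ a : R, c ∣ a →
      (G i j).comp (C (C (algebraMap R L a)) * X) ∈
        (mapRingHom (mapRingHom (algebraMap R L))).range := by
    intro i j
    refine Polynomial.exists_comp_C_mul_X_mem_range S _ ?_
    have := congr_fun₂ hG i j
    rw [Matrix.map_apply] at this
    rw [this, Matrix.one_apply]
    split_ifs
    · exact one_mem _
    · exact zero_mem _
  choose c hc h using h
  refine ⟨∏ i, ∏ j, c i j, S.prod_mem fun i _ ↦ S.prod_mem fun j _ ↦ hc i j, fun a ha ↦ ?_⟩
  choose H hH using fun i j ↦ h i j a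
    (((Finset.dvd_prod_of_mem _ (Finset.mem_univ j)).trans
      (Finset.dvd_prod_of_mem (fun i ↦ ∏ j, c i j) (Finset.mem_univ i))).trans ha)
  refine ⟨Matrix.of H, ?_⟩
  ext1 i j
  simpa using hH i j

lemma GLRel.exists_forall_aeval_add_smul (hinj : Function.Injective (algebraMap R L))
    (v : ι → R[X])
    (h : GLRel (mapRingHom (algebraMap R L) ∘ v)
      (fun i ↦ C (algebraMap R L ((v i).eval 0)))) :
    ∃ c ∈ S, ∀ (B : Type*) [CommRing B] [Algebra R B] (s t : B),
      GLRel (fun i ↦ aeval (s + c • t) (v i)) (fun i ↦ aeval s (v i)) := by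
  obtain ⟨M, N, hMN, hNM, hv⟩ := h
  set ψ := mapRingHom (algebraMap R L)
  set ψ₂ := mapRingHom ψ
  have hψ₂inj : Function.Injective ψ₂ := map_injective _ (map_injective _ hinj)
  let φ : L[X] →+* L[X][X] := eval₂RingHom (C.comp C) (C X + X)
  have hφC (a : L) : φ (C a) = C (C a) := by simp [φ]
  have hφ0 (q : L[X]) : (φ q).coeff 0 = q := by
    have : (constantCoeff.comp φ) = RingHom.id _ := by ext <;> simp [φ]
    exact congr($this q)
  have hmap (f : L[X] →+* L[X][X]) {P Q : Matrix ι ι L[X]} (hPQ : P * Q = 1) :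
      P.map f * Q.map f = 1 := by
    rw [← Matrix.map_mul, hPQ, Matrix.map_one f f.map_zero f.map_one]
  let G := N.map C * M.map φ
  let G' := N.map φ * M.map C
  have hGG' : G * G' = 1 := by
    simp only [G, G']
    rw [mul_assoc, ← mul_assoc (M.map φ), hmap φ hMN, one_mul, hmap C hNM]
  have hG'G : G' * G = 1 := by
    simp only [G, G']
    rw [mul_assoc, ← mul_assoc (M.map C), hmap C hMN, one_mul, hmap φ hNM]
  have hcoeff (f f' : L[X] →+* L[X][X]) (hf : ∀ q, (f q).coeff 0 = q)
      (hf' : ∀ q, (f' q).coeff 0 = q) : (N.map f * M.map f').map (fun g ↦ g.coeff 0) = 1 := by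
    change (N.map f * M.map f').map (constantCoeff : L[X][X] →+* L[X]) = 1
    rw [Matrix.map_mul, ← hNM]
    congr 1 <;> ext1 i j <;> simp [hf, hf']
  have hGv : G.mulVec (φ ∘ ψ ∘ v) = C ∘ ψ ∘ v := by
    have h1 : (M.map φ).mulVec (φ ∘ ψ ∘ v) = (M.map C).mulVec (C ∘ ψ ∘ v) := by
      ext1 i
      rw [← RingHom.map_mulVec, ← RingHom.map_mulVec, hv, hφC]
    rw [← Matrix.mulVec_mulVec, h1, Matrix.mulVec_mulVec, hmap C hNM, Matrix.one_mulVec]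
  obtain ⟨c, hc, hcG⟩ := Matrix.exists_map_eq_map_comp_C_mul_X S G (hcoeff C φ (by simp) hφ0)
  obtain ⟨c', hc', hcG'⟩ := Matrix.exists_map_eq_map_comp_C_mul_X S G' (hcoeff φ C hφ0 (by simp))
  obtain ⟨H, hH⟩ := hcG (c * c') (dvd_mul_right _ _)
  obtain ⟨H', hH'⟩ := hcG' (c * c') (dvd_mul_left _ _)
  refine ⟨c * c', mul_mem hc hc', fun B _ _ s t ↦ ?_⟩
  set a := c * c'
  set θ := compRingHom (C (C (algebraMap R L a)) * X)
  have hHH {P Q : Matrix ι ι L[X][X]} {P' Q' : Matrix ι ι R[X][X]} (hPQ : P * Q = 1)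
      (hP : P'.map ψ₂ = P.map θ) (hQ : Q'.map ψ₂ = Q.map θ) : P' * Q' = 1 := by
    apply Matrix.map_injective hψ₂inj
    simp only
    rw [Matrix.map_mul, hP, hQ, ← Matrix.map_mul, hPQ, Matrix.map_one _ (map_zero _) (map_one _),
      Matrix.map_one _ (map_zero _) (map_one _)]
  let τ : R[X] →+* R[X][X] := eval₂RingHom (C.comp C) (C X + C (C a) * X)
  have hτ : ψ₂.comp τ = θ.comp (φ.comp ψ) := by
    ext <;> simp [ψ₂, τ, θ, φ, ψ]
  have hHv : H.mulVec (τ ∘ v) = C ∘ v := by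
    ext1 i
    apply hψ₂inj
    rw [RingHom.map_mulVec, hH]
    have h1 : ψ₂ ∘ τ ∘ v = θ ∘ φ ∘ ψ ∘ v := by
      ext1 i
      exact congr($hτ (v i))
    rw [h1, ← RingHom.map_mulVec, hGv]
    simp [θ, ψ₂]
  let ε : R[X][X] →+* B := eval₂RingHom (aeval s : R[X] →ₐ[R] B).toRingHom t
  have hrel : GLRel (τ ∘ v) (C ∘ v) := ⟨H, H', hHH hGG' hH hH', hHH hG'G hH' hH, hHv⟩
  have hετ : ε.comp τ = (aeval (s + a • t) : R[X] →ₐ[R] B).toRingHom := by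
    ext <;> simp [ε, τ, Algebra.smul_def]
  convert hrel.map ε using 1
  · ext1 i
    exact congr($hετ (v i)).symm
  · ext1 i
    simp [ε]

end Patching

section Global

universe u
variable {ι : Type*} {R : Type u} [Fintype ι] [DecidableEq ι] [CommRing R] [IsDomain R]

/-- A unimodular vector over `R[X]` with a monic entry is equivalent to its value at `0`. -/
lemma GLRel.eval_zero_of_monic (hι : 2 < Fintype.card ι) {v : ι → R[X]}
    (hv : ∃ a : ι → R[X], a ⬝ᵥ v = 1) {i : ι} (hi : (v i).Monic) :
    GLRel v (fun i ↦ C ((v i).eval 0)) := by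
  let J : Ideal R :=
    { carrier := {c | ∀ (B : Type u) [CommRing B] [Algebra R B] (s t : B),
        GLRel (fun i ↦ aeval (s + c • t) (v i)) (fun i ↦ aeval s (v i))}
      add_mem' := by
        intro c d hc hd B _ _ s t
        have := (hd B (s + c • t) t).trans (hc B s t)
        rwa [add_assoc, ← _root_.add_smul] at this
      zero_mem' := by
        intro B _ _ s t
        simpa using refl _
      smul_mem' := by
        intro b c hc B _ _ s t
        simpa [smul_smul, mul_comm] using hc B s (b • t) }
  have hJ : J = ⊤ := by
    by_contra hne
    obtain ⟨p, hp, hJp⟩ := J.exists_le_maximal hne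
    let L := Localization.AtPrime p
    let ψ := mapRingHom (algebraMap R L)
    obtain ⟨a, ha⟩ := hv
    obtain ⟨j, hj⟩ := exists_single_of_monic hι (v := ψ ∘ v)
      ⟨ψ ∘ a, by rw [← RingHom.map_dotProduct, ha, map_one]⟩ (i := i) (hi.map _)
    have hj0 := (hj.map (evalRingHom 0)).map (C : L →+* L[X])
    have hsingle : C ∘ evalRingHom 0 ∘ (Pi.single j 1 : ι → L[X]) = Pi.single j 1 := by
      ext1 l
      rcases eq_or_ne l j with rfl | h <;> simp [*]
    rw [hsingle] at hj0
    have hrel := hj.trans hj0.symm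
    obtain ⟨c, hc, h⟩ := exists_forall_aeval_add_smul.{_, _, _, u} p.primeCompl
      (IsLocalization.injective L p.primeCompl_le_nonZeroDivisors) v (by
        convert hrel using 1
        ext1 l
        simp [ψ, eval_map, eval₂_at_zero, coeff_zero_eq_eval_zero])
    exact hc (hJp h)
  have h1 : (1 : R) ∈ J := hJ ▸ Submodule.mem_top
  simpa [aeval_def, algebraMap_eq, ← coeff_zero_eq_eval_zero, eval₂_at_zero] using h1 R[X] 0 X

end Global

section Nagata

variable {k : Type*} [Field k] {n : ℕ}

/-- The substitution fixing `X 0` and sending `X i` to `X i + c * X 0 ^ N ^ i` for `i ≠ 0`. -/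
noncomputable def nagataHom (n N : ℕ) (c : k) :
    MvPolynomial (Fin (n + 1)) k →ₐ[k] MvPolynomial (Fin (n + 1)) k :=
  MvPolynomial.aeval fun i ↦
    if i = 0 then MvPolynomial.X 0 else MvPolynomial.X i + c • MvPolynomial.X 0 ^ N ^ (i : ℕ)

lemma nagataHom_comp_neg (N : ℕ) (c : k) :
    (nagataHom n N c).comp (nagataHom n N (-c)) = AlgHom.id _ _ := by
  ext1 i
  cases i using Fin.cases <;> simp [nagataHom]

/-- Nagata's change of variables, followed by viewing `X 0` as the main variable. -/
noncomputable def nagataEquiv (k : Type*) [Field k] (n N : ℕ) :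
    MvPolynomial (Fin (n + 1)) k ≃ₐ[k] (MvPolynomial (Fin n) k)[X] :=
  (AlgEquiv.ofAlgHom (nagataHom n N 1) (nagataHom n N (-1)) (nagataHom_comp_neg N 1)
    (by simpa using nagataHom_comp_neg (n := n) N (-1 : k))).trans (MvPolynomial.finSuccEquiv k n)

lemma nagataEquiv_X (N : ℕ) [NeZero N] (i : Fin (n + 1)) :
    (nagataEquiv k n N (MvPolynomial.X i)).Monic ∧
      (nagataEquiv k n N (MvPolynomial.X i)).natDegree = N ^ (i : ℕ) := by
  cases i using Fin.cases with
  | zero => simp [nagataEquiv, nagataHom, MvPolynomial.finSuccEquiv_X_zero, monic_X]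
  | succ i =>
    have : nagataEquiv k n N (MvPolynomial.X i.succ) =
        X ^ N ^ (i.succ : ℕ) + C (MvPolynomial.X i) := by
      simp [nagataEquiv, nagataHom, MvPolynomial.finSuccEquiv_X_zero,
        MvPolynomial.finSuccEquiv_X_succ, add_comm]
    rw [this]
    exact ⟨monic_X_pow_add_C _ (NeZero.ne _), natDegree_X_pow_add_C⟩

lemma nagataEquiv_monomial (N : ℕ) [NeZero N] (v : Fin (n + 1) →₀ ℕ) {a : k} (ha : a ≠ 0) :
    (nagataEquiv k n N (MvPolynomial.monomial v a)).leadingCoeff = MvPolynomial.C a ∧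
      (nagataEquiv k n N (MvPolynomial.monomial v a)).natDegree = ∑ i, v i * N ^ (i : ℕ) := by
  have h : nagataEquiv k n N (MvPolynomial.monomial v a) =
      C (MvPolynomial.C a) * ∏ i, nagataEquiv k n N (MvPolynomial.X i) ^ v i := by
    rw [MvPolynomial.monomial_eq, Finsupp.prod_pow, map_mul, map_prod]
    simp only [map_pow]
    congr 1
    exact (nagataEquiv k n N).commutes a
  have hm : ∀ i ∈ Finset.univ, (nagataEquiv k n N (MvPolynomial.X i) ^ v i).Monic :=
    fun i _ ↦ (nagataEquiv_X N i).1.pow _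
  rw [h]
  constructor
  · rw [leadingCoeff_mul, leadingCoeff_C, monic_prod_of_monic _ _ hm, mul_one]
  · rw [natDegree_C_mul (by simpa using ha), natDegree_prod_of_monic _ _ hm]
    exact Finset.sum_congr rfl fun i _ ↦ by
      rw [(nagataEquiv_X N i).1.natDegree_pow, (nagataEquiv_X N i).2]

lemma Fin.sum_mul_pow_injOn {n N : ℕ} {v w : Fin n → ℕ} (hv : ∀ i, v i < N) (hw : ∀ i, w i < N)
    (h : ∑ i, v i * N ^ (i : ℕ) = ∑ i, w i * N ^ (i : ℕ)) : v = w := by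
  induction n with
  | zero => exact Subsingleton.elim _ _
  | succ n ih =>
    rw [Fin.sum_univ_succ, Fin.sum_univ_succ] at h
    simp only [Fin.val_zero, pow_zero, mul_one, Fin.val_succ, pow_succ, ← mul_assoc,
      ← Finset.sum_mul] at h
    have h0 : v 0 = w 0 := by
      have := congr($h % N)
      simpa [Nat.mod_eq_of_lt, hv, hw] using this
    have hN : 0 < N := (Nat.zero_le _).trans_lt (hv 0)
    have hs := ih (fun i ↦ hv i.succ) (fun i ↦ hw i.succ)
      (Nat.eq_of_mul_eq_mul_right hN (by omega))
    ext i
    cases i using Fin.cases with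
    | zero => exact h0
    | succ i => exact congr_fun hs i

/-- After a suitable change of variables, a nonzero polynomial is monic up to a unit. -/
lemma exists_algEquiv_isUnit_leadingCoeff {f : MvPolynomial (Fin (n + 1)) k} (hf : f ≠ 0) :
    ∃ e : MvPolynomial (Fin (n + 1)) k ≃ₐ[k] (MvPolynomial (Fin n) k)[X],
      IsUnit (e f).leadingCoeff := by
  let N := f.totalDegree + 1
  refine ⟨nagataEquiv k n N, ?_⟩
  let g : (Fin (n + 1) →₀ ℕ) → (MvPolynomial (Fin n) k)[X] :=
    fun v ↦ nagataEquiv k n N (MvPolynomial.monomial v (f.coeff v))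
  have hg : ∀ v ∈ f.support, (g v).leadingCoeff = MvPolynomial.C (f.coeff v) ∧
      (g v).natDegree = ∑ i, v i * N ^ (i : ℕ) :=
    fun v hv ↦ nagataEquiv_monomial N v (MvPolynomial.mem_support_iff.mp hv)
  have hlt : ∀ v ∈ f.support, ∀ i, v i < N := fun v hv i ↦ Nat.lt_succ_of_le
    ((MvPolynomial.monomial_le_degreeOf i hv).trans (MvPolynomial.degreeOf_le_totalDegree f i))
  obtain ⟨v, hv, hmax⟩ := Finset.exists_max_image f.support (fun v ↦ (g v).natDegree)
    (MvPolynomial.support_nonempty.mpr hf)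
  have hgv : g v ≠ 0 := by
    rw [← leadingCoeff_ne_zero, (hg v hv).1]
    simpa using hv
  have hsum : nagataEquiv k n N f = g v + ∑ w ∈ f.support.erase v, g w := by
    rw [Finset.add_sum_erase _ _ hv]
    conv_lhs => rw [← f.support_sum_monomial_coeff]
    exact map_sum _ _ _
  have hdeg : (∑ w ∈ f.support.erase v, g w).degree < (g v).degree := by
    refine (degree_sum_le _ _).trans_lt
      ((Finset.sup_lt_iff (bot_lt_iff_ne_bot.mpr (degree_ne_bot.mpr hgv))).mpr fun w hw ↦ ?_)
    obtain ⟨hne, hw⟩ := Finset.mem_erase.mp hw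
    refine degree_lt_degree (lt_of_le_of_ne (hmax w hw) fun heq ↦ hne (DFunLike.coe_injective ?_))
    rw [(hg w hw).2, (hg v hv).2] at heq
    exact Fin.sum_mul_pow_injOn (hlt w hw) (hlt v hv) heq
  rw [hsum, leadingCoeff_add_of_degree_lt' hdeg, (hg v hv).1]
  exact (MvPolynomial.mem_support_iff.mp hv).isUnit.map MvPolynomial.C

end Nagata

section Unimodular

lemma GLRel.smul_of_isUnit {ι R : Type*} [Fintype ι] [DecidableEq ι] [CommRing R] (v : ι → R)
    {a b : R} (h : a * b = 1) : GLRel v (a • v) :=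
  ⟨a • 1, b • 1, by simp [smul_smul, mul_comm b, h], by simp [smul_smul, h],
    by simp [Matrix.smul_mulVec]⟩

lemma GLRel.exists_single_of_isUnit {ι R : Type*} [Fintype ι] [DecidableEq ι] [CommRing R]
    [Nontrivial ι] {v : ι → R} {i : ι} (hi : IsUnit (v i)) : ∃ i, GLRel v (Pi.single i 1) := by
  obtain ⟨l, hl⟩ := exists_ne i
  obtain ⟨b, hb⟩ := hi.exists_left_inv
  refine ⟨l, (update_add v (i := l) (Pi.single i ((1 - v l) * b)) (by simp [hl])).trans
    (single_of_eq_one _ _ ?_)⟩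
  simp [mul_assoc, hb]

lemma exists_ne_zero_of_unimodular {ι R : Type*} [Fintype ι] [CommRing R] [Nontrivial R]
    {v : ι → R} (hv : ∃ a, a ⬝ᵥ v = 1) : ∃ i, v i ≠ 0 := by
  by_contra! h0
  obtain ⟨a, ha⟩ := hv
  simp [dotProduct, h0] at ha

/-- Unimodular vectors of length at least three over `k[x₁, …, xₙ]`. -/
lemma GLRel.exists_single_of_two_lt_card {ι k : Type*} [Fintype ι] [DecidableEq ι] [Field k]
    (hι : 2 < Fintype.card ι) {n : ℕ} {v : ι → MvPolynomial (Fin n) k}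
    (hv : ∃ a, a ⬝ᵥ v = 1) : ∃ i, GLRel v (Pi.single i 1) := by
  have : Nontrivial ι := Fintype.one_lt_card_iff_nontrivial.mp (by omega)
  induction n with
  | zero =>
    obtain ⟨i, hi⟩ := exists_ne_zero_of_unimodular hv
    refine exists_single_of_isUnit (i := i) ?_
    rw [← isUnit_map_iff (MvPolynomial.isEmptyAlgEquiv k (Fin 0))]
    exact (EmbeddingLike.map_ne_zero_iff.mpr hi).isUnit
  | succ n ih =>
    obtain ⟨i, hi⟩ := exists_ne_zero_of_unimodular hv
    obtain ⟨e, he⟩ := exists_algEquiv_isUnit_leadingCoeff hi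
    obtain ⟨b, hb⟩ := he.exists_left_inv
    set f : (MvPolynomial (Fin n) k)[X] := e (v i)
    let w : ι → (MvPolynomial (Fin n) k)[X] := C b • (e ∘ v)
    have hvw : GLRel (e ∘ v) w := smul_of_isUnit _ (b := C f.leadingCoeff) (by rw [← C_mul, hb, C_1])
    have hw : ∃ a, a ⬝ᵥ w = 1 := by
      obtain ⟨a, ha⟩ := hv
      refine hvw.unimodular ⟨e ∘ a, ?_⟩
      have := RingHom.map_dotProduct (e : _ →+* (MvPolynomial (Fin n) k)[X]) a v
      rw [ha, map_one] at this
      exact this.symm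
    have hwi : (w i).Monic := by
      change (C b * f).leadingCoeff = 1
      rw [leadingCoeff_mul, leadingCoeff_C, hb]
    have hw0 := eval_zero_of_monic hι hw hwi
    obtain ⟨a, ha⟩ := hw
    have hu : (evalRingHom 0 ∘ a) ⬝ᵥ (fun i ↦ (w i).eval 0) = 1 := by
      have := RingHom.map_dotProduct (evalRingHom 0) a w
      rw [ha, map_one] at this
      exact this.symm
    obtain ⟨j, hj⟩ := ih ⟨_, hu⟩
    have hrel := (hvw.trans (hw0.trans (hj.map C))).map
      (e.symm : (MvPolynomial (Fin n) k)[X] →+* MvPolynomial (Fin (n + 1)) k)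
    refine ⟨j, ?_⟩
    convert hrel using 1
    · ext1 i
      simp
    · ext1 i
      rcases eq_or_ne i j with rfl | h <;> simp [*]

/-- Every unimodular vector over `k[x₁, …, xₙ]` is equivalent to a standard basis vector. -/
lemma GLRel.exists_single_mvPolynomial {k : Type*} [Field k] {n m : ℕ}
    {v : Fin m → MvPolynomial (Fin n) k} (hv : ∃ a, a ⬝ᵥ v = 1) :
    ∃ i, GLRel v (Pi.single i 1) := by
  match m, v, hv with
  | 0, v, ⟨a, ha⟩ => simp at ha
  | 1, v, ⟨a, ha⟩ =>
    refine ⟨0, ?_⟩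
    have hone : a 0 * v 0 = 1 := by simpa [dotProduct] using ha
    convert smul_of_isUnit v hone using 1
    ext1 i
    fin_cases i
    simp [hone]
  | 2, v, ⟨a, ha⟩ =>
    have hone : a 0 * v 0 + a 1 * v 1 = 1 := by simpa [dotProduct, Fin.sum_univ_two] using ha
    have hdet : !![a 0, a 1; - v 1, v 0].det = 1 := by
      rw [Matrix.det_fin_two_of]; linear_combination hone
    refine ⟨0, !![a 0, a 1; - v 1, v 0], !![a 0, a 1; - v 1, v 0]⁻¹, ?_, ?_, ?_⟩
    · exact Matrix.mul_nonsing_inv _ (by simp [hdet])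
    · exact Matrix.nonsing_inv_mul _ (by simp [hdet])
    · ext1 i
      fin_cases i
      · simpa [Matrix.mulVec, dotProduct, Fin.sum_univ_two] using hone
      · simp [Matrix.mulVec, dotProduct, Fin.sum_univ_two, mul_comm]
  | m + 3, v, hv => exact exists_single_of_two_lt_card (by simp) hv

end Unimodular

section StablyFree

variable {R : Type*} [CommRing R]

lemma Module.Free.ker_proj {ι : Type*} [Fintype ι] [DecidableEq ι] (i : ι) :
    Module.Free R (LinearMap.ker (LinearMap.proj i : (ι → R) →ₗ[R] R)) :=
  let e : ({j // j ≠ i} → R) ≃ₗ[R] LinearMap.ker (LinearMap.proj i : (ι → R) →ₗ[R] R) :=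
    { toFun y := ⟨fun j ↦ if h : j = i then 0 else y ⟨j, h⟩, by simp⟩
      invFun x j := x.1 j
      map_add' x y := by ext j; by_cases h : j = i <;> simp [h]
      map_smul' c x := by ext j; by_cases h : j = i <;> simp [h]
      left_inv y := by ext j; simp [j.2]
      right_inv x := by
        ext j
        have hx : x.1 i = 0 := x.2
        by_cases h : j = i <;> simp [h, hx] }
  Module.Free.of_equiv e

lemma GLRel.free_ker {ι : Type*} [Fintype ι] [DecidableEq ι] {v : ι → R} {i : ι}
    (h : GLRel v (Pi.single i 1)) {φ : (ι → R) →ₗ[R] R} (hφ : ∀ x, φ x = v ⬝ᵥ x) :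
    Module.Free R (LinearMap.ker φ) := by
  obtain ⟨M, N, hMN, hNM, hv⟩ := h
  let T : (ι → R) ≃ₗ[R] (ι → R) :=
    LinearEquiv.ofLinearMap N.transpose.mulVecLin M.transpose.mulVecLin
    (by rw [← Matrix.mulVecLin_mul, ← Matrix.transpose_mul, hMN]; simp)
    (by rw [← Matrix.mulVecLin_mul, ← Matrix.transpose_mul, hNM]; simp)
  have hT : φ = LinearMap.proj i ∘ₗ T.toLinearMap := by
    refine LinearMap.ext fun x ↦ ?_
    have hv' : v = N.mulVec (Pi.single i 1) := by
      rw [← hv, Matrix.mulVec_mulVec, hNM, Matrix.one_mulVec]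
    rw [hφ, hv', dotProduct_comm, Matrix.dotProduct_mulVec, ← Matrix.mulVec_transpose]
    simp [T, Matrix.mulVec_transpose]
  have := Module.Free.ker_proj (R := R) i
  have hker : LinearMap.ker φ =
      (LinearMap.ker (LinearMap.proj i : (ι → R) →ₗ[R] R)).map (T.symm : (ι → R) →ₗ[R] (ι → R)) := by
    rw [hT, LinearMap.ker_comp]
    exact Submodule.comap_equiv_eq_map_symm _ _
  rw [hker]
  exact Module.Free.of_equiv (T.symm.submoduleMap _)

variable [Nontrivial R]

lemma Module.Free.of_prod_self (hR : ∀ (m : ℕ) (v : Fin m → R), (∃ a, a ⬝ᵥ v = 1) →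
    ∃ i, GLRel v (Pi.single i 1)) (P : Type*) [AddCommGroup P] [Module R P] [Module.Finite R P]
    [Module.Free R (P × R)] : Module.Free R P := by
  let e := (Module.finBasis R (P × R)).equivFun
  let φ := LinearMap.snd R P R ∘ₗ e.symm.toLinearMap
  let v := fun j ↦ φ (Pi.single j 1)
  have hφ : ∀ x, φ x = v ⬝ᵥ x := by
    intro x
    conv_lhs => rw [pi_eq_sum_univ' x, map_sum]
    simp [v, dotProduct, mul_comm]
  obtain ⟨i, hi⟩ := hR _ v ⟨e (0, 1), by rw [dotProduct_comm, ← hφ]; simp [φ]⟩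
  have := hi.free_ker hφ
  let ψ := e.toLinearMap ∘ₗ LinearMap.inl R P R
  have hψ : Function.Injective ψ := e.injective.comp LinearMap.inl_injective
  have hker : LinearMap.ker φ = LinearMap.range ψ := by
    rw [LinearMap.ker_comp, LinearMap.ker_snd, LinearMap.range_comp]
    exact Submodule.comap_equiv_eq_map_symm _ _
  rw [hker] at this
  exact Module.Free.of_equiv (LinearEquiv.ofInjective ψ hψ).symm

lemma Module.Free.of_prod_pi (hR : ∀ (m : ℕ) (v : Fin m → R), (∃ a, a ⬝ᵥ v = 1) →
    ∃ i, GLRel v (Pi.single i 1)) (P : Type*) [AddCommGroup P] [Module R P] [Module.Finite R P]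
    (m : ℕ) (h : Module.Free R (P × (Fin m → R))) : Module.Free R P := by
  induction m with
  | zero => exact Module.Free.of_equiv (LinearEquiv.prodUnique (R := R) (M := P) (M₂ := Fin 0 → R))
  | succ m ih =>
    have : Module.Free R ((P × (Fin m → R)) × R) := Module.Free.of_equiv
      (((LinearEquiv.refl R P).prodCongr
        ((Fin.consLinearEquiv R (fun _ : Fin (m + 1) ↦ R)).symm.trans
          (LinearEquiv.prodComm R _ _))).trans (LinearEquiv.prodAssoc R P (Fin m → R) R).symm)
    exact ih (Module.Free.of_prod_self hR (P × (Fin m → R)))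

end StablyFree

section MonicTorsion

variable {A : Type*} [CommRing A]

lemma Polynomial.exists_linearMap_monic_mul {g : A[X]} (hg : g.Monic) :
    ∃ δ : A[X] →ₗ[A] A[X], ∀ f, δ (g * f) = f := by
  refine ⟨{ toFun := fun f ↦ f /ₘ g, map_add' := fun f h ↦ ?_, map_smul' := fun c f ↦ ?_ },
    fun f ↦ mul_divByMonic_cancel_left f hg⟩
  · apply hg.isRegular.left
    have := add_modByMonic (q := g) f h
    simp only [modByMonic_eq_sub_mul_div] at this
    simp only
    linear_combination -this
  · apply hg.isRegular.left
    have := smul_modByMonic (q := g) c f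
    simp only [modByMonic_eq_sub_mul_div, smul_eq_C_mul] at this
    simp only [smul_eq_C_mul, RingHom.id_apply]
    linear_combination -this

lemma Module.Projective.exists_linearMap_monic_smul {P : Type*} [AddCommGroup P] [Module A[X] P]
    [Module A P] [IsScalarTower A A[X] P] [Module.Projective A[X] P] {g : A[X]} (hg : g.Monic) :
    ∃ ρ : P →ₗ[A] P, ∀ x, ρ (g • x) = x := by
  obtain ⟨δ, hδ⟩ := exists_linearMap_monic_mul hg
  obtain ⟨s, hs⟩ := Module.projective_def.mp ‹Module.Projective A[X] P›
  refine ⟨(Finsupp.linearCombination A[X] id).restrictScalars A ∘ₗ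
    Finsupp.mapRange.linearMap δ ∘ₗ s.restrictScalars A, fun x ↦ ?_⟩
  have : Finsupp.mapRange.linearMap δ (s (g • x)) = s x := by
    ext1 y
    simp [hδ]
  change Finsupp.linearCombination A[X] id (Finsupp.mapRange.linearMap δ (s (g • x))) = x
  rw [this]
  exact hs x

lemma Module.Finite.of_monic_smul_eq_zero {K : Type*} [AddCommGroup K] [Module A[X] K]
    [Module A K] [IsScalarTower A A[X] K] [Module.Finite A[X] K] {g : A[X]} (hg : g.Monic)
    (hK : ∀ x : K, g • x = 0) : Module.Finite A K := by
  nontriviality A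
  obtain ⟨r, t, ht⟩ := Module.Finite.exists_fin (R := A[X]) (M := K)
  have : Module.Finite A (degreeLT A g.natDegree) :=
    Module.Finite.equiv (degreeLTEquiv A g.natDegree).symm
  refine Module.Finite.of_surjective ((Fintype.linearCombination A[X] t).restrictScalars A ∘ₗ
    (degreeLT A g.natDegree).subtype.compLeft (Fin r)) fun x ↦ ?_
  obtain ⟨c, rfl⟩ := (Submodule.mem_span_range_iff_exists_fun A[X]).mp
    (ht ▸ Submodule.mem_top : x ∈ Submodule.span A[X] (Set.range t))
  refine ⟨fun i ↦ ⟨c i %ₘ g, mem_degreeLT.mpr ?_⟩, ?_⟩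
  · rw [← degree_eq_natDegree hg.ne_zero]
    exact degree_modByMonic_lt _ hg
  · simp only [LinearMap.comp_apply, LinearMap.restrictScalars_apply,
      Fintype.linearCombination_apply]
    refine Finset.sum_congr rfl fun i _ ↦ ?_
    simp [modByMonic_eq_sub_mul_div, sub_smul, mul_smul, hK]

lemma Module.Projective.quotient_of_monic_smul_mem {M : Type*} [AddCommGroup M] [Module A[X] M]
    [Module A M] [IsScalarTower A A[X] M] [Module.Projective A M] (F : Submodule A[X] M)
    [Module.Projective A[X] F] {g : A[X]} (hg : g.Monic) (hF : ∀ x, g • x ∈ F) :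
    Module.Projective A (M ⧸ F) := by
  obtain ⟨ρ, hρ⟩ := Module.Projective.exists_linearMap_monic_smul (P := F) hg
  let μ : M →ₗ[A] F :=
    { toFun := fun x ↦ ⟨g • x, hF x⟩
      map_add' := fun x y ↦ by ext; simp
      map_smul' := fun c x ↦ Subtype.ext (by
        change g • c • x = c • g • x
        rw [← algebraMap_smul A[X] c x, ← algebraMap_smul A[X] c (g • x), smul_comm]) }
  let π : M →ₗ[A] M := LinearMap.id - F.subtype.restrictScalars A ∘ₗ ρ ∘ₗ μ
  have hπ : F.restrictScalars A ≤ LinearMap.ker π := by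
    intro x hx
    have : μ x = g • ⟨x, hx⟩ := rfl
    simp [π, this, hρ]
  let σ : (M ⧸ F) →ₗ[A] M := (F.restrictScalars A).liftQ π hπ
  refine Module.Projective.of_split σ (F.mkQ.restrictScalars A) (LinearMap.ext fun x ↦ ?_)
  obtain ⟨x, rfl⟩ := F.mkQ_surjective x
  change F.mkQ (x - (ρ (μ x) : F)) = F.mkQ x
  simp

/-- **Schanuel's lemma**. -/
noncomputable def schanuelEquiv {R F G K : Type*} [CommRing R] [AddCommGroup F] [Module R F]
    [AddCommGroup G] [Module R G] [AddCommGroup K] [Module R K] {p : F →ₗ[R] K} {a : G →ₗ[R] K}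
    {s : G →ₗ[R] F} {t : F →ₗ[R] G} (hs : p ∘ₗ s = a) (ht : a ∘ₗ t = p) :
    (LinearMap.ker p × G) ≃ₗ[R] LinearMap.ker a × F :=
  have hs' (x) : p (s x) = a x := congr($hs x)
  have ht' (x) : a (t x) = p x := congr($ht x)
  { toFun z := (⟨z.2 - t (z.1 + s z.2), by simp [hs', ht']⟩, z.1 + s z.2)
    invFun z := (⟨z.2 - s (z.1 + t z.2), by simp [hs', ht']⟩, z.1 + t z.2)
    map_add' x y := by ext <;> simp <;> abel
    map_smul' c x := by ext <;> simp [smul_sub]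
    left_inv z := by ext <;> simp
    right_inv z := by ext <;> simp }

open Matrix in
lemma Polynomial.exists_eq_charmatrix_mulVec_add {m : ℕ} (Φ : Matrix (Fin m) (Fin m) A)
    (u : Fin m → A[X]) :
    ∃ (w : Fin m → A[X]) (c : Fin m → A), u = Φ.charmatrix *ᵥ w + C ∘ c := by
  let N : AddSubmonoid (Fin m → A[X]) :=
    { carrier := {u | ∃ (w : Fin m → A[X]) (c : Fin m → A), u = Φ.charmatrix *ᵥ w + C ∘ c}
      add_mem' := by
        rintro _ _ ⟨w, c, rfl⟩ ⟨w', c', rfl⟩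
        refine ⟨w + w', c + c', ?_⟩
        rw [mulVec_add]
        ext1 i
        simp
        ring
      zero_mem' := ⟨0, 0, by ext1 i; simp⟩ }
  have hX : ∀ u ∈ N, (X : A[X]) • u ∈ N := by
    rintro _ ⟨w, c, rfl⟩
    refine ⟨(X : A[X]) • w + C ∘ c, Φ *ᵥ c, ?_⟩
    have : Φ.charmatrix *ᵥ ((C : A →+* A[X]) ∘ c) =
        (X : A[X]) • (C ∘ c) - (C : A →+* A[X]) ∘ (Φ *ᵥ c) := by
      rw [charmatrix, sub_mulVec]
      congr 1
      · ext1 i; simp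
      · ext1 i; simp [RingHom.map_mulVec, RingHom.mapMatrix_apply]
    rw [mulVec_add, this, mulVec_smul, smul_add]
    abel
  have hXn : ∀ (n : ℕ) (u), u ∈ N → (X ^ n : A[X]) • u ∈ N := by
    intro n
    induction n with
    | zero => intro u hu; simpa using hu
    | succ n ih => intro u hu; rw [pow_succ, mul_smul]; exact ih _ (hX u hu)
  have hsingle : ∀ (p : A[X]) (i : Fin m), Pi.single i p ∈ N := by
    intro p i
    induction p using Polynomial.induction_on' with
    | add p q hp hq => rw [Pi.single_add]; exact add_mem hp hq
    | monomial n a =>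
      have := hXn n (C ∘ Pi.single i a) ⟨0, Pi.single i a, by simp⟩
      convert this using 1
      ext1 j
      rcases eq_or_ne j i with rfl | h
      · rw [Pi.single_eq_same, Pi.smul_apply, Function.comp_apply, Pi.single_eq_same, smul_eq_mul,
          X_pow_mul, C_mul_X_pow_eq_monomial]
      · simp [h]
  rw [← Finset.univ_sum_single u]
  exact N.sum_mem fun i _ ↦ hsingle (u i) i

lemma Polynomial.C_smul_eq_smul {K : Type*} [AddCommGroup K] [Module A[X] K] [Module A K]
    [IsScalarTower A A[X] K] (a : A) (x : K) : C a • x = a • x := by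
  rw [← algebraMap_eq, algebraMap_smul]

lemma Module.Basis.nonempty_pi_equiv_ker_linearCombination [IsDomain A] {K : Type*} [AddCommGroup K]
    [Module A[X] K] [Module A K] [IsScalarTower A A[X] K] {m : ℕ} (b : Module.Basis (Fin m) A K) :
    Nonempty ((Fin m → A[X]) ≃ₗ[A[X]] LinearMap.ker (Fintype.linearCombination A[X] b)) := by
  let Φ : Matrix (Fin m) (Fin m) A := Matrix.of fun j i ↦ b.repr ((X : A[X]) • b i) j
  let ψ := Φ.charmatrix.mulVecLin
  have hinj : Function.Injective ψ := by
    rw [← LinearMap.ker_eq_bot, LinearMap.ker_eq_bot']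
    exact fun x hx ↦ Matrix.eq_zero_of_mulVec_eq_zero (Matrix.charpoly_monic Φ).ne_zero hx
  have hcomp : Fintype.linearCombination A[X] b ∘ₗ ψ = 0 := by
    ext i
    have h1 : (X : A[X]) • b i = ∑ j, Φ j i • b j := (b.sum_repr _).symm
    have h2 (j) : Φ.charmatrix j i • b j =
        (if j = i then (X : A[X]) • b j else 0) - Φ j i • b j := by
      rw [Matrix.charmatrix_apply, sub_smul, Matrix.diagonal_apply, ite_smul, zero_smul,
        C_smul_eq_smul]
    simp [ψ, Fintype.linearCombination_apply, h2, h1]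
  have hker : LinearMap.ker (Fintype.linearCombination A[X] b) = LinearMap.range ψ := by
    refine le_antisymm (fun u hu ↦ ?_) (LinearMap.range_le_ker_iff.mpr hcomp)
    obtain ⟨w, c, rfl⟩ := exists_eq_charmatrix_mulVec_add Φ u
    have hw : Fintype.linearCombination A[X] b (Φ.charmatrix.mulVec w) = 0 := congr($hcomp w)
    rw [LinearMap.mem_ker, map_add, hw, zero_add, Fintype.linearCombination_apply] at hu
    have hc : c = 0 := by
      ext i
      refine Fintype.linearIndependent_iff.mp b.linearIndependent c ?_ i
      simpa [C_smul_eq_smul] using hu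
    refine ⟨w, ?_⟩
    ext1 i
    simp [ψ, hc]
  rw [hker]
  exact ⟨LinearEquiv.ofInjective ψ hinj⟩

/-- A finite projective module over `A[X]` containing a free submodule with quotient killed by a
monic polynomial is stably free, if finite projective modules over `A` are free. -/
lemma Module.Free.exists_free_prod_of_monic_smul_mem.{v} {A : Type*} [CommRing A] [IsDomain A]
    (hA : ∀ (K : Type v) [AddCommGroup K] [Module A K] [Module.Finite A K]
      [Module.Projective A K], Module.Free A K)
    (M : Type v) [AddCommGroup M] [Module A[X] M] [Module.Finite A[X] M]
    [Module.Projective A[X] M] (F : Submodule A[X] M) [Module.Free A[X] F]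
    {g : A[X]} (hg : g.Monic) (hF : ∀ x, g • x ∈ F) :
    ∃ m : ℕ, Module.Free A[X] (M × (Fin m → A[X])) := by
  let : Module A M := Module.compHom M (C : A →+* A[X])
  have : IsScalarTower A A[X] M := ⟨fun a p x ↦ by
    rw [smul_eq_C_mul, mul_smul]; rfl⟩
  have : Module.Projective A M := by
    obtain ⟨s, hs⟩ := Module.projective_def'.mp ‹Module.Projective A[X] M›
    exact Module.Projective.of_split (s.restrictScalars A)
      ((Finsupp.linearCombination A[X] id).restrictScalars A)
      (LinearMap.ext fun x ↦ congr($hs x))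
  have : Module.Projective A (M ⧸ F) := Module.Projective.quotient_of_monic_smul_mem F hg hF
  have : Module.Finite A (M ⧸ F) := Module.Finite.of_monic_smul_eq_zero hg fun x ↦ by
    obtain ⟨x, rfl⟩ := F.mkQ_surjective x
    rw [← map_smul, Submodule.mkQ_apply, Submodule.Quotient.mk_eq_zero]
    exact hF x
  have := hA (M ⧸ F)
  let b := Module.finBasis A (M ⧸ F)
  let a := Fintype.linearCombination A[X] b
  have ha : Function.Surjective a := fun x ↦ ⟨fun i ↦ C (b.repr x i), by
    simp [a, Fintype.linearCombination_apply, C_smul_eq_smul]⟩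
  obtain ⟨s, hs⟩ := Module.projective_lifting_property F.mkQ a F.mkQ_surjective
  obtain ⟨t, ht⟩ := Module.projective_lifting_property a F.mkQ ha
  obtain ⟨e⟩ := b.nonempty_pi_equiv_ker_linearCombination
  have : Module.Free A[X] (LinearMap.ker F.mkQ) := by rwa [Submodule.ker_mkQ]
  exact ⟨_, Module.Free.of_equiv
    ((schanuelEquiv hs ht).trans
      ((e.symm.prodCongr (LinearEquiv.refl _ M)).trans (LinearEquiv.prodComm _ _ _)))⟩

end MonicTorsion

lemma Submodule.exists_free_smul_mem {R M : Type*} [CommRing R] [IsDomain R] [AddCommGroup M]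
    [Module R M] [Module.Finite R M] :
    ∃ F : Submodule R M, Module.Free R F ∧ ∃ g : R, g ≠ 0 ∧ ∀ x, g • x ∈ F := by
  obtain ⟨r, t, ht⟩ := Module.Finite.exists_fin (R := R) (M := M)
  obtain ⟨s, hs, hmax⟩ := exists_maximal_linearIndepOn R t
  have (i : Fin r) : ∃ a : R, a ≠ 0 ∧ a • t i ∈ span R (t '' s) := by
    by_cases hi : i ∈ s
    · exact ⟨1, one_ne_zero, by simpa using subset_span (Set.mem_image_of_mem t hi)⟩
    · exact hmax i hi
  choose a ha hat using this
  refine ⟨span R (t '' s), ?_, ∏ i, a i, Finset.prod_ne_zero_iff.mpr fun i _ ↦ ha i, fun x ↦ ?_⟩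
  · rw [Set.image_eq_range]
    exact Module.Free.of_basis (Module.Basis.span hs)
  · have hx : x ∈ span R (Set.range t) := ht ▸ mem_top
    induction hx using span_induction with
    | mem x hx =>
      obtain ⟨i, rfl⟩ := hx
      rw [← Finset.prod_erase_mul _ _ (Finset.mem_univ i), mul_smul]
      exact smul_mem _ _ (hat i)
    | zero => simp
    | add x y _ _ hx hy => rw [smul_add]; exact add_mem hx hy
    | smul c x _ hx => rw [smul_comm]; exact smul_mem _ _ hx

/-- The inductive step: freeness of finite projective modules passes from `A` to a ring `R`
isomorphic to `A[X]`, provided unimodular vectors over `R` are completable and every nonzero element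
of `R` has unit leading coefficient for some isomorphism with `A[X]`. -/
lemma Module.Free.of_exists_isUnit_leadingCoeff.{v} {A R : Type*} [CommRing A] [IsDomain A]
    [CommRing R] [IsDomain R]
    (hA : ∀ (K : Type v) [AddCommGroup K] [Module A K] [Module.Finite A K]
      [Module.Projective A K], Module.Free A K)
    (he : ∀ g : R, g ≠ 0 → ∃ e : R ≃+* A[X], IsUnit (e g).leadingCoeff)
    (hR : ∀ (m : ℕ) (v : Fin m → R), (∃ a, a ⬝ᵥ v = 1) → ∃ i, GLRel v (Pi.single i 1))
    (M : Type v) [AddCommGroup M] [Module R M] [Module.Finite R M] [Module.Projective R M] :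
    Module.Free R M := by
  obtain ⟨F, hF, g, hg0, hg⟩ := Submodule.exists_free_smul_mem (R := R) (M := M)
  obtain ⟨e, b, hb⟩ := he g hg0
  let : Module A[X] M := Module.compHom M (e.symm : A[X] →+* R)
  have hsmul (p : A[X]) (x : M) : p • x = e.symm p • x := rfl
  have := RingHomInvPair.of_ringEquiv e
  have := RingHomInvPair.symm (e : R →+* A[X]) (e.symm : A[X] →+* R)
  let ι : M ≃ₛₗ[(e : R →+* A[X])] M :=
    { AddEquiv.refl M with map_smul' := fun c x ↦ by simp [hsmul] }
  have : Module.Finite A[X] M := Module.Finite.of_surjective ι.toLinearMap ι.surjective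
  have : Module.Projective A[X] M := Module.Projective.of_equiv ι
  have : Module.Free A[X] (F.map ι.toLinearMap) := Module.Free.of_equiv (ι.submoduleMap F)
  have hmonic : (C (↑b⁻¹ : A) * e g).Monic :=
    monic_C_mul_of_mul_leadingCoeff_eq_one (by simp [← hb])
  obtain ⟨m, hm⟩ := Module.Free.exists_free_prod_of_monic_smul_mem hA M (F.map ι.toLinearMap)
    hmonic fun x ↦ ⟨e.symm (C (↑b⁻¹ : A)) • g • x, F.smul_mem _ (hg x), by
      change e.symm (C (↑b⁻¹ : A)) • g • x = _
      rw [hsmul, map_mul, e.symm_apply_apply, mul_smul]⟩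
  have : Module.Free A[X] M := by
    refine Module.Free.of_prod_pi (fun m v ⟨a, ha⟩ ↦ ?_) M m hm
    obtain ⟨i, hi⟩ := hR m (e.symm ∘ v) ⟨e.symm ∘ a, by
      simpa [dotProduct] using congr(e.symm $ha)⟩
    refine ⟨i, ?_⟩
    convert hi.map (e : R →+* A[X])
    · ext1 j; simp
    · ext1 j; simp [Pi.single_apply, apply_ite e]
  exact Module.Free.of_equiv ι.symm

/-- **Quillen–Suslin theorem**: every finitely generated projective module over a
polynomial ring `k[x₁,…,xₙ]` over a field `k` is free. -/
theorem quillen_suslin {k : Type*} [Field k] (n : ℕ)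
    (M : Type*) [AddCommGroup M] [Module (MvPolynomial (Fin n) k) M]
    [Module.Finite (MvPolynomial (Fin n) k) M]
    [Module.Projective (MvPolynomial (Fin n) k) M] :
    Module.Free (MvPolynomial (Fin n) k) M := by
  induction n generalizing M with
  | zero =>
    have : IsLocalRing (MvPolynomial (Fin 0) k) :=
      (MvPolynomial.isEmptyAlgEquiv k (Fin 0)).symm.toRingEquiv.isLocalRing
    exact Module.free_of_flat_of_isLocalRing
  | succ n ih =>
    refine Module.Free.of_exists_isUnit_leadingCoeff (A := MvPolynomial (Fin n) k)
      (fun K ↦ ih K) (fun g hg ↦ ?_) (fun m v ↦ GLRel.exists_single_mvPolynomial) M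
    obtain ⟨e, he⟩ := exists_algEquiv_isUnit_leadingCoeff hg
    exact ⟨e.toRingEquiv, he⟩
end
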